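/- Let K be a field of characteristic ≠ 2 and let α₂, β₂, α₄, β₄ ∈ K. Let A be the K-algebra on K² with basis e₁, e₂ whose multiplication is the commutative K-bilinear map m with m(e₁,e₁) = e₂, m(e₁,e₂) = α₂e₁ + β₂e₂, m(e₂,e₂) = α₄e₁ + β₄e₂. Then m is associative if and only if α₄ = α₂β₂ and β₄ = α₂ + β₂². -/

import Mathlib

/-!
Write `L` for multiplication by `e₁`. Associativity of a commutative product means that its
multiplication operators commute. Here `e₁` and `e₂ = e₁²` span, and `e₁² e₁² = e₁ (e₁ e₁²)` forces
multiplication by `e₂` to agree with `L²` on both spanning vectors, so every multiplication operator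
is a polynomial in `L`. Hence this single identity is equivalent to associativity, and its
coordinates are the two equations.
-/

section CommutativeProducts

variable {R M : Type*} [CommSemiring R] [AddCommMonoid M] [Module R M]
  {m : M →ₗ[R] Module.End R M}

theorem mul_assoc_iff_forall_commute (hcomm : ∀ x y, m x y = m y x) :
    (∀ x y z, m (m x y) z = m x (m y z)) ↔ ∀ x y, Commute (m x) (m y) := by
  constructor
  · intro hassoc x y
    ext z
    calc m x (m y z) = m (m x y) z := (hassoc x y z).symm
      _ = m (m y x) z := by rw [hcomm x y]
      _ = m y (m x z) := hassoc y x z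
  · intro hcommute x y z
    calc m (m x y) z = m z (m x y) := hcomm _ _
      _ = m x (m z y) := LinearMap.congr_fun (hcommute z x) y
      _ = m x (m y z) := by rw [hcomm z y]

theorem mul_assoc_iff_sq_mul_sq_of_span_eq_top (hcomm : ∀ x y, m x y = m y x) {e : M}
    (hspan : Submodule.span R {e, m e e} = ⊤) :
    (∀ x y z, m (m x y) z = m x (m y z)) ↔ m (m e e) (m e e) = m e (m e (m e e)) := by
  refine ⟨fun hassoc ↦ hassoc e e (m e e), fun hfourth ↦ ?_⟩
  have mul_sq : m (m e e) = m e ^ 2 := by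
    refine LinearMap.ext_on hspan ?_
    rintro x (rfl | rfl)
    · exact hcomm _ _
    · exact hfourth
  have mem_adjoin (x : M) : m x ∈ Algebra.adjoin R {m e} := by
    have mem : m e ∈ Algebra.adjoin R {m e} := Algebra.self_mem_adjoin_singleton R (m e)
    have sq_mem : m (m e e) ∈ Algebra.adjoin R {m e} := mul_sq ▸ pow_mem mem 2
    have le_comap : Submodule.span R {e, m e e} ≤
        (Subalgebra.toSubmodule (Algebra.adjoin R {m e})).comap m :=
      Submodule.span_le.2 (Set.pair_subset mem sq_mem)
    exact le_comap (hspan ▸ Submodule.mem_top)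
  refine (mul_assoc_iff_forall_commute hcomm).2 fun x y ↦ ?_
  exact Algebra.commute_of_mem_adjoin_singleton_of_commute (mem_adjoin y)
    (Algebra.commute_of_mem_adjoin_self (mem_adjoin x)).symm

end CommutativeProducts

section Coordinates

variable {R M : Type*} [CommSemiring R] [AddCommMonoid M] [Module R M]

theorem basis_smul_add_smul_inj (b : Module.Basis (Fin 2) R M) {r s r' s' : R} :
    r • b 0 + s • b 1 = r' • b 0 + s' • b 1 ↔ r = r' ∧ s = s' := by
  simp [b.ext_elem_iff, Fin.forall_fin_two, Finsupp.single_apply]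

theorem coe_basisFun_fin_two : ⇑(Pi.basisFun R (Fin 2)) = ![![1, 0], ![0, 1]] := by
  ext i j
  fin_cases i <;> fin_cases j <;> simp

theorem stmt_12_general (b : Module.Basis (Fin 2) R M) {α₂ β₂ α₄ β₄ : R}
    {m : M →ₗ[R] M →ₗ[R] M} (hcomm : ∀ x y, m x y = m y x)
    (h11 : m (b 0) (b 0) = b 1)
    (h12 : m (b 0) (b 1) = α₂ • b 0 + β₂ • b 1)
    (h22 : m (b 1) (b 1) = α₄ • b 0 + β₄ • b 1) :
    (∀ x y z, m (m x y) z = m x (m y z)) ↔ (α₄ = α₂ * β₂ ∧ β₄ = α₂ + β₂ ^ 2) := by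
  have hspan : Submodule.span R {b 0, m (b 0) (b 0)} = ⊤ := by
    have range_eq : Set.range b = {b 0, b 1} := by
      ext x
      simp [Fin.exists_fin_two, eq_comm]
    rw [h11, ← range_eq, b.span_eq]
  have mul_mul_eq : m (b 0) (m (b 0) (b 1)) = (α₂ * β₂) • b 0 + (α₂ + β₂ ^ 2) • b 1 := by
    rw [h12, map_add, map_smul, map_smul, h11, h12]
    module
  rw [mul_assoc_iff_sq_mul_sq_of_span_eq_top hcomm hspan, h11, h22, mul_mul_eq,
    basis_smul_add_smul_inj b]

end Coordinates

/-- The algebra `m¹⁵'¹_R`: associativity holds iff `α₄ = α₂β₂` and `β₄ = α₂ + β₂²`. -/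
theorem stmt_12 (K : Type*) [Field K] (hchar : (2 : K) ≠ 0) (α₂ β₂ α₄ β₄ : K)
    (m : (Fin 2 → K) →ₗ[K] (Fin 2 → K) →ₗ[K] (Fin 2 → K))
    (hcomm : ∀ x y, m x y = m y x)
    (h11 : m ![1, 0] ![1, 0] = ![0, 1])
    (h12 : m ![1, 0] ![0, 1] = α₂ • ![1, 0] + β₂ • ![0, 1])
    (h22 : m ![0, 1] ![0, 1] = α₄ • ![1, 0] + β₄ • ![0, 1]) :
    (∀ x y z, m (m x y) z = m x (m y z)) ↔ (α₄ = α₂ * β₂ ∧ β₄ = α₂ + β₂ ^ 2) := by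
  apply stmt_12_general (Pi.basisFun K (Fin 2)) hcomm <;> rw [coe_basisFun_fin_two] <;> assumption
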